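/- Let α : ℕ → ℍ and let Γ_α act on sequences by (Γ_α v)(j) = Σ_k α(j+k) v(k). If there exists ψ ∈ L^∞ₛ(∂𝔹) with Fourier coefficients ψ̂(m) = \overline{α_m} for all m ≥ 0, then Γ_α is bounded on ℓ²(ℕ, ℍ) with ‖Γ_α‖ ≤ 2 ‖ψ‖_{L^∞(∂𝔹)}. -/

import Mathlib

noncomputable section

open MeasureTheory Quaternion

instance : MeasurableSpace (Quaternion ℝ) := borel _
instance : BorelSpace (Quaternion ℝ) := ⟨rfl⟩

/-- The sphere `𝕊` of imaginary units of `ℍ`. -/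
def IU : Type := {I : Quaternion ℝ // I ^ 2 = -1}

instance : MeasurableSpace IU := Subtype.instMeasurableSpace

/-- The point `e^{tI} = cos t + (sin t) I`. -/
def eI (I : Quaternion ℝ) (t : ℝ) : Quaternion ℝ :=
  ((Real.cos t : ℝ) : Quaternion ℝ) + Real.sin t • I

/-- The normalized measure `dΣ(e^{tI}) = dσ(I) dt` on `∂𝔹`, obtained by pushing forward
`σ ⊗ (dt on (0, 2π])` under `(I, t) ↦ e^{tI}` and normalizing by `2π`. -/
def sphereMeasure (σ : Measure IU) : Measure (Quaternion ℝ) :=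
  (ENNReal.ofReal (2 * Real.pi))⁻¹ •
    Measure.map (fun p : IU × ℝ => eI p.1.1 p.2)
      (σ.prod (volume.restrict (Set.Ioc 0 (2 * Real.pi))))

/-- A slice function on `∂𝔹`: it satisfies the representation formula. -/
def IsSlice (f : Quaternion ℝ → Quaternion ℝ) : Prop :=
  ∀ x y : ℝ, ∀ I J : Quaternion ℝ, I ^ 2 = -1 → J ^ 2 = -1 → x ^ 2 + y ^ 2 = 1 →
    f ((x : Quaternion ℝ) + y • J) =
      ((1 - J * I) / 2) * f ((x : Quaternion ℝ) + y • I) +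
      ((1 + J * I) / 2) * f ((x : Quaternion ℝ) - y • I)

/-- The `n`-th Fourier coefficient of (the restriction to the slice of `I` of) a function
on `∂𝔹`: `φ̂(n) = (1/2π) ∫₀^{2π} e^{-nIt} φ(e^{It}) dt`. -/
def fourierCoef (φ : Quaternion ℝ → Quaternion ℝ) (I : Quaternion ℝ) (n : ℤ) : Quaternion ℝ :=
  (2 * Real.pi)⁻¹ • ∫ t in (0:ℝ)..(2 * Real.pi), eI I (-(n * t)) * φ (eI I t)

/-! Fix an imaginary unit `I` for which `t ↦ ψ(e^{tI})` is bounded by `‖ψ‖_∞`, put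
`φ(t) = star (ψ(e^{tI}))`, and let `V(t) = Σ e^{ktI} v(k)`, so that `(Γ_α v)(j)` is the mean of
`φ(t) e^{jtI} V(t)` over `t`. Split `φ = P + Q`, where `P` commutes and `Q` anticommutes with `I`.
Moving the exponential to the left past `φ` keeps its frequency on `P` and reverses it on `Q`, hence
`(Γ_α v)(j)` is the sum of the `(-j)`-th Fourier coefficient of `P V` and the `j`-th Fourier
coefficient of `Q V`. Bessel's inequality for both products and `|P|² + |Q|² = |φ|²` give
`‖Γ_α v‖² ≤ 2 (‖P V‖² + ‖Q V‖²) = 2 ‖φ V‖² ≤ 2 ‖ψ‖_∞² ‖v‖²`. -/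

open scoped RealInnerProductSpace ENNReal

theorem summable_of_norm_sum_rpow_le {κ G : Type*} [NormedAddCommGroup G] [CompleteSpace G]
    {f : κ → G} {g : κ → ℝ} {r : ℝ} (hr : 0 < r) (hg : Summable g)
    (hfg : ∀ t : Finset κ, ‖∑ k ∈ t, f k‖ ^ r ≤ ∑ k ∈ t, g k) : Summable f := by
  refine summable_iff_vanishing_norm.2 fun ε hε ↦ ?_
  obtain ⟨s, hs⟩ := summable_iff_vanishing_norm.1 hg (ε ^ r) (by positivity)
  refine ⟨s, fun t ht ↦ (Real.rpow_lt_rpow_iff (norm_nonneg _) hε.le hr).1 ?_⟩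
  exact ((hfg t).trans (le_abs_self _)).trans_lt (hs t ht)

theorem exists_lp_hasSum_of_sum_rpow_le {ι κ : Type*} {E : κ → Type*} {F : ι → Type*}
    [∀ k, NormedAddCommGroup (E k)] [∀ j, NormedAddCommGroup (F j)] [∀ j, CompleteSpace (F j)]
    {p : ℝ≥0∞} {v : lp E p} {x : ∀ j, κ → F j} {C : ℝ} (hp : 0 < p.toReal) (hC : 0 ≤ C)
    (hx : ∀ (s : Finset ι) (t : Finset κ), ∑ j ∈ s, ‖∑ k ∈ t, x j k‖ ^ p.toReal
      ≤ C ^ p.toReal * ∑ k ∈ t, ‖v k‖ ^ p.toReal) :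
    ∃ w : lp F p, (∀ j, HasSum (x j) (w j)) ∧ ‖w‖ ≤ C * ‖v‖ := by
  have hv : Summable fun k ↦ C ^ p.toReal * ‖v k‖ ^ p.toReal :=
    ((lp.memℓp v).summable hp).mul_left _
  have hsum (j : ι) : HasSum (x j) (∑' k, x j k) :=
    (summable_of_norm_sum_rpow_le hp hv fun t ↦ by
      simpa only [Finset.sum_singleton, Finset.mul_sum] using hx {j} t).hasSum
  have hbound (s : Finset ι) :
      ∑ j ∈ s, ‖∑' k, x j k‖ ^ p.toReal ≤ (C * ‖v‖) ^ p.toReal := by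
    have hlim := tendsto_finsetSum s fun j _ ↦ (hsum j).norm.rpow_const (.inr hp.le)
    refine le_of_tendsto hlim (.of_forall fun t ↦ (hx s t).trans ?_)
    rw [Real.mul_rpow hC (lp.norm_nonneg' v)]
    gcongr
    exact lp.sum_rpow_le_norm_rpow hp v t
  exact ⟨⟨_, memℓp_gen' hbound⟩, hsum,
    lp.norm_le_of_forall_sum_le hp (mul_nonneg hC (lp.norm_nonneg' v)) hbound⟩

section Quaternion

theorem inner_mul_left_eq_inner_star_mul (a x y : ℍ[ℝ]) : ⟪a * x, y⟫ = ⟪x, star a * y⟫ := by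
  simp only [Quaternion.inner_def, star_mul, star_star, Quaternion.re_mul, Quaternion.imI_mul,
    Quaternion.imJ_mul, Quaternion.imK_mul]
  ring

theorem integral_quaternion_star {X : Type*} [MeasurableSpace X] (μ : Measure X) (f : X → ℍ[ℝ]) :
    ∫ x, star (f x) ∂μ = star (∫ x, f x ∂μ) :=
  have : StarModule ℝ ℍ[ℝ] := ⟨Quaternion.star_smul⟩
  (starL' ℝ : ℍ[ℝ] ≃L[ℝ] ℍ[ℝ]).integral_comp_comm f

variable {I : ℍ[ℝ]}

theorem norm_eq_one_of_sq_eq_neg_one (hI : I ^ 2 = -1) : ‖I‖ = 1 := by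
  have : ‖I‖ ^ 2 = 1 := by rw [← norm_pow, hI, norm_neg, norm_one]
  exact (pow_eq_one_iff_of_nonneg (norm_nonneg I) two_ne_zero).1 this

theorem star_eq_neg_of_sq_eq_neg_one (hI : I ^ 2 = -1) : star I = -I := by
  have hnorm := norm_eq_one_of_sq_eq_neg_one hI
  rw [Quaternion.star_eq_neg, ← Quaternion.sq_eq_neg_normSq, hI,
    Quaternion.normSq_eq_norm_mul_self, hnorm]
  simp

theorem eI_eq_smul_add_smul (I : ℍ[ℝ]) (t : ℝ) :
    eI I t = Real.cos t • (1 : ℍ[ℝ]) + Real.sin t • I := by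
  rw [eI, ← Quaternion.coe_mul_eq_smul _ 1, mul_one]

@[fun_prop]
theorem continuous_eI {X : Type*} [TopologicalSpace X] {f : X → ℍ[ℝ]} {g : X → ℝ}
    (hf : Continuous f) (hg : Continuous g) : Continuous fun x ↦ eI (f x) (g x) := by
  simp only [eI_eq_smul_add_smul]
  fun_prop

@[simp]
theorem eI_zero (I : ℍ[ℝ]) : eI I 0 = 1 := by simp [eI]

theorem eI_add (hI : I ^ 2 = -1) (s t : ℝ) : eI I (s + t) = eI I s * eI I t := by
  have hII : I * I = -1 := by rw [← sq, hI]
  simp only [eI_eq_smul_add_smul, Real.cos_add, Real.sin_add, mul_add, add_mul, smul_mul_assoc,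
    mul_smul_comm, one_mul, mul_one, hII]
  module

theorem star_eI (hI : I ^ 2 = -1) (t : ℝ) : star (eI I t) = eI I (-t) := by
  simp [eI, star_eq_neg_of_sq_eq_neg_one hI]

theorem norm_eI (hI : I ^ 2 = -1) (t : ℝ) : ‖eI I t‖ = 1 := by
  have : ‖eI I t‖ ^ 2 = 1 := by
    rw [sq, ← CStarRing.norm_star_mul_self, star_eI hI, ← eI_add hI, neg_add_cancel, eI_zero,
      norm_one]
  exact (pow_eq_one_iff_of_nonneg (norm_nonneg _) two_ne_zero).1 this

/-- The component of a quaternion `q` commuting with the imaginary unit `I`; the complementary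
component `q - commPart I q` anticommutes with `I`. -/
def commPart (I q : ℍ[ℝ]) : ℍ[ℝ] := (2 : ℝ)⁻¹ • (q - I * q * I)

@[fun_prop]
theorem continuous_commPart (I : ℍ[ℝ]) : Continuous (commPart I) := by
  unfold commPart
  fun_prop

theorem mul_eI (hI : I ^ 2 = -1) (q : ℍ[ℝ]) (t : ℝ) :
    q * eI I t = eI I t * commPart I q + eI I (-t) * (q - commPart I q) := by
  have hIqI : I * (I * q * I) = -(q * I) := by
    rw [← mul_assoc, ← mul_assoc, ← sq, hI, neg_one_mul, neg_mul]
  simp only [commPart, eI_eq_smul_add_smul, Real.cos_neg, Real.sin_neg, mul_add, add_mul, mul_sub,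
    smul_mul_assoc, mul_smul_comm, one_mul, mul_one, hIqI]
  module

theorem norm_sq_commPart_add_norm_sq_sub (hI : I ^ 2 = -1) (q : ℍ[ℝ]) :
    ‖commPart I q‖ ^ 2 + ‖q - commPart I q‖ ^ 2 = ‖q‖ ^ 2 := by
  have hIqI : ‖I * q * I‖ = ‖q‖ := by simp [norm_eq_one_of_sq_eq_neg_one hI]
  have hsub : q - commPart I q = (2 : ℝ)⁻¹ • (q + I * q * I) := by
    rw [commPart]
    module
  have hparallelogram := parallelogram_law_with_norm ℝ q (I * q * I)
  rw [hsub, commPart, norm_smul, norm_smul, Real.norm_of_nonneg (by norm_num)]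
  rw [hIqI] at hparallelogram
  linarith

end Quaternion

section AngleMeasure

/-- The normalized arc length `dt / 2π` on the interval `(0, 2π]` of angles. -/
def angleMeasure : Measure ℝ :=
  (ENNReal.ofReal (2 * Real.pi))⁻¹ • volume.restrict (Set.Ioc 0 (2 * Real.pi))

instance : IsProbabilityMeasure angleMeasure := by
  refine ⟨?_⟩
  rw [angleMeasure, Measure.smul_apply, Measure.restrict_apply_univ, Real.volume_Ioc, sub_zero,
    smul_eq_mul, ENNReal.inv_mul_cancel _ ENNReal.ofReal_ne_top]
  simpa using Real.pi_pos

theorem integral_angleMeasure {E : Type*} [NormedAddCommGroup E] [NormedSpace ℝ E] (f : ℝ → E) :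
    ∫ t, f t ∂angleMeasure = (2 * Real.pi)⁻¹ • ∫ t in (0 : ℝ)..(2 * Real.pi), f t := by
  rw [angleMeasure, integral_smul_measure, ENNReal.toReal_inv,
    ENNReal.toReal_ofReal Real.two_pi_pos.le, intervalIntegral.integral_of_le Real.two_pi_pos.le]

theorem integral_eI_int_mul (I : ℍ[ℝ]) (n : ℤ) :
    ∫ t, eI I (n * t) ∂angleMeasure = if n = 0 then 1 else 0 := by
  split_ifs with hn
  · simp [hn]
  have hn' : (n : ℝ) ≠ 0 := mod_cast hn
  have hsin : Real.sin (n * (2 * Real.pi)) = 0 := by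
    simpa using Real.sin_periodic.int_mul n 0
  rw [integral_angleMeasure, intervalIntegral.integral_comp_mul_left (eI I) hn']
  simp only [eI_eq_smul_add_smul]
  rw [intervalIntegral.integral_add (Continuous.intervalIntegrable (by fun_prop) _ _)
    (Continuous.intervalIntegrable (by fun_prop) _ _), intervalIntegral.integral_smul_const,
    intervalIntegral.integral_smul_const, integral_cos, integral_sin, hsin,
    Real.cos_int_mul_two_pi]
  simp

end AngleMeasure

section FourierCoefficients

variable {I : ℍ[ℝ]} {ι : Type*}

/-- The Fourier coefficient `(1/2π) ∫₀^{2π} e^{-ntI} h(t) dt` of a quaternion-valued function of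
the angle, with the exponential acting on the left. It extends `fourierCoef` to functions that are
not restrictions to the slice of `I` of functions on `∂𝔹`. -/
def angleFourierCoeff (I : ℍ[ℝ]) (h : ℝ → ℍ[ℝ]) (n : ℤ) : ℍ[ℝ] :=
  ∫ t, eI I (-(n * t)) * h t ∂angleMeasure

theorem fourierCoef_eq_angleFourierCoeff (ψ : ℍ[ℝ] → ℍ[ℝ]) (I : ℍ[ℝ]) (n : ℤ) :
    fourierCoef ψ I n = angleFourierCoeff I (fun t ↦ ψ (eI I t)) n :=
  (integral_angleMeasure _).symm

theorem star_angleFourierCoeff (hI : I ^ 2 = -1) (h : ℝ → ℍ[ℝ]) (n : ℤ) :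
    star (angleFourierCoeff I h n) = ∫ t, star (h t) * eI I (n * t) ∂angleMeasure := by
  rw [angleFourierCoeff, ← integral_quaternion_star]
  simp only [star_mul, star_eI hI, neg_neg]

/-- The trigonometric polynomial `Σ_{k ∈ s} e^{ν(k)tI} c(k)` with right coefficients `c` and
frequencies `ν`. -/
def trigSum (I : ℍ[ℝ]) (s : Finset ι) (ν : ι → ℤ) (c : ι → ℍ[ℝ]) (t : ℝ) : ℍ[ℝ] :=
  ∑ k ∈ s, eI I (ν k * t) * c k

@[fun_prop]
theorem continuous_trigSum (I : ℍ[ℝ]) (s : Finset ι) (ν : ι → ℤ) (c : ι → ℍ[ℝ]) :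
    Continuous (trigSum I s ν c) := by
  unfold trigSum
  fun_prop

theorem norm_trigSum_le (hI : I ^ 2 = -1) (s : Finset ι) (ν : ι → ℤ) (c : ι → ℍ[ℝ]) (t : ℝ) :
    ‖trigSum I s ν c t‖ ≤ ∑ k ∈ s, ‖c k‖ :=
  norm_sum_le_of_le s fun k _ ↦ by rw [norm_mul, norm_eI hI, one_mul]

theorem memLp_trigSum (hI : I ^ 2 = -1) (s : Finset ι) (ν : ι → ℤ) (c : ι → ℍ[ℝ]) (p : ℝ≥0∞) :
    MemLp (trigSum I s ν c) p angleMeasure :=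
  .of_bound (continuous_trigSum I s ν c).aestronglyMeasurable _
    (.of_forall (norm_trigSum_le hI s ν c))

theorem integrable_eI_mul (hI : I ^ 2 = -1) {h : ℝ → ℍ[ℝ]} (hh : Integrable h angleMeasure)
    {x : ℝ → ℝ} (hx : Continuous x) : Integrable (fun t ↦ eI I (x t) * h t) angleMeasure :=
  hh.bdd_mul (c := 1) (by fun_prop) (.of_forall fun t ↦ (norm_eI hI _).le)

theorem inner_trigSum (hI : I ^ 2 = -1) (q : ℍ[ℝ]) (s : Finset ι) (ν : ι → ℤ) (c : ι → ℍ[ℝ])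
    (t : ℝ) : ⟪q, trigSum I s ν c t⟫ = ∑ k ∈ s, ⟪eI I (-(ν k * t)) * q, c k⟫ := by
  simp only [trigSum, inner_sum, inner_mul_left_eq_inner_star_mul, star_eI hI, neg_neg]

theorem integrable_inner_trigSum (hI : I ^ 2 = -1) {h : ℝ → ℍ[ℝ]}
    (hh : Integrable h angleMeasure) (s : Finset ι) (ν : ι → ℤ) (c : ι → ℍ[ℝ]) :
    Integrable (fun t ↦ ⟪h t, trigSum I s ν c t⟫) angleMeasure := by
  simp only [inner_trigSum hI]
  exact integrable_finsetSum s fun k _ ↦ (integrable_eI_mul hI hh (by fun_prop)).inner_const (c k)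

theorem integral_inner_trigSum (hI : I ^ 2 = -1) {h : ℝ → ℍ[ℝ]} (hh : Integrable h angleMeasure)
    (s : Finset ι) (ν : ι → ℤ) (c : ι → ℍ[ℝ]) :
    ∫ t, ⟪h t, trigSum I s ν c t⟫ ∂angleMeasure
      = ∑ k ∈ s, ⟪angleFourierCoeff I h (ν k), c k⟫ := by
  have hint (k : ι) : Integrable (fun t ↦ eI I (-(ν k * t)) * h t) angleMeasure :=
    integrable_eI_mul hI hh (by fun_prop)
  simp only [inner_trigSum hI, angleFourierCoeff]
  rw [integral_finsetSum s fun k _ ↦ (hint k).inner_const (c k)]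
  refine Finset.sum_congr rfl fun k _ ↦ ?_
  simp only [real_inner_comm (c k)]
  exact integral_inner (hint k) (c k)

theorem angleFourierCoeff_trigSum (hI : I ^ 2 = -1) {s : Finset ι} {ν : ι → ℤ}
    (hν : ν.Injective) (c : ι → ℍ[ℝ]) {j : ι} (hj : j ∈ s) :
    angleFourierCoeff I (trigSum I s ν c) (ν j) = c j := by
  have hexpand (t : ℝ) : eI I (-(ν j * t)) * trigSum I s ν c t
      = ∑ k ∈ s, eI I ((ν k - ν j : ℤ) * t) * c k := by
    rw [trigSum, Finset.mul_sum]
    refine Finset.sum_congr rfl fun k _ ↦ ?_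
    rw [← mul_assoc, ← eI_add hI]
    push_cast
    ring_nf
  have hint (n : ℤ) : Integrable (fun t ↦ eI I (n * t)) angleMeasure := by
    simpa using integrable_eI_mul hI (integrable_const 1) (by fun_prop : Continuous (n * · : ℝ → ℝ))
  classical
  have hterm (k : ι) : ∫ t, eI I ((ν k - ν j : ℤ) * t) * c k ∂angleMeasure
      = if k = j then c k else 0 := by
    rw [integral_mul_const_of_integrable (hint _), integral_eI_int_mul]
    simp only [sub_eq_zero, hν.eq_iff, ite_mul, one_mul, zero_mul]
  simp only [angleFourierCoeff, hexpand]
  rw [integral_finsetSum s fun k _ ↦ (hint _).mul_const (c k)]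
  simp only [hterm, Finset.sum_ite_eq', if_pos hj]

theorem integral_norm_sq_trigSum (hI : I ^ 2 = -1) (s : Finset ι) {ν : ι → ℤ}
    (hν : ν.Injective) (c : ι → ℍ[ℝ]) :
    ∫ t, ‖trigSum I s ν c t‖ ^ 2 ∂angleMeasure = ∑ k ∈ s, ‖c k‖ ^ 2 := by
  calc ∫ t, ‖trigSum I s ν c t‖ ^ 2 ∂angleMeasure
      = ∫ t, ⟪trigSum I s ν c t, trigSum I s ν c t⟫ ∂angleMeasure := by
        simp only [real_inner_self_eq_norm_sq]
    _ = ∑ k ∈ s, ⟪angleFourierCoeff I (trigSum I s ν c) (ν k), c k⟫ :=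
        integral_inner_trigSum hI ((memLp_trigSum hI s ν c 1).integrable le_rfl) s ν c
    _ = ∑ k ∈ s, ‖c k‖ ^ 2 := Finset.sum_congr rfl fun k hk ↦ by
        rw [angleFourierCoeff_trigSum hI hν c hk, real_inner_self_eq_norm_sq]

theorem sum_norm_sq_angleFourierCoeff_le (hI : I ^ 2 = -1) {h : ℝ → ℍ[ℝ]}
    (hh : MemLp h 2 angleMeasure) (s : Finset ι) {ν : ι → ℤ} (hν : ν.Injective) :
    ∑ k ∈ s, ‖angleFourierCoeff I h (ν k)‖ ^ 2 ≤ ∫ t, ‖h t‖ ^ 2 ∂angleMeasure := by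
  set c : ι → ℍ[ℝ] := fun k ↦ angleFourierCoeff I h (ν k)
  set S := trigSum I s ν c
  have hS : MemLp S 2 angleMeasure := memLp_trigSum hI s ν c 2
  have hh1 : Integrable h angleMeasure := hh.integrable one_le_two
  have hinner : ∫ t, ⟪h t, S t⟫ ∂angleMeasure = ∑ k ∈ s, ‖c k‖ ^ 2 := by
    simp only [S, integral_inner_trigSum hI hh1, c, real_inner_self_eq_norm_sq]
  have hinner_int : Integrable (fun t ↦ 2 * ⟪h t, S t⟫) angleMeasure :=
    (integrable_inner_trigSum hI hh1 s ν c).const_mul 2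
  have hh_sq := hh.integrable_norm_pow two_ne_zero
  have hS_sq := hS.integrable_norm_pow two_ne_zero
  have hexpand : ∫ t, ‖h t - S t‖ ^ 2 ∂angleMeasure
      = ∫ t, ‖h t‖ ^ 2 ∂angleMeasure - ∑ k ∈ s, ‖c k‖ ^ 2 := by
    simp only [norm_sub_sq_real]
    rw [integral_add (f := fun t ↦ ‖h t‖ ^ 2 - 2 * ⟪h t, S t⟫) (hh_sq.sub hinner_int) hS_sq,
      integral_sub hh_sq hinner_int, integral_const_mul, hinner, integral_norm_sq_trigSum hI s hν]
    ring
  have hnonneg : 0 ≤ ∫ t, ‖h t - S t‖ ^ 2 ∂angleMeasure := integral_nonneg fun _ ↦ by positivity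
  linarith

end FourierCoefficients

section Hankel

variable {I : ℍ[ℝ]} {ι : Type*}

theorem integral_mul_eI_mul (hI : I ^ 2 = -1) {φ f : ℝ → ℍ[ℝ]} (n : ℤ)
    (hP : Integrable (fun t ↦ commPart I (φ t) * f t) angleMeasure)
    (hQ : Integrable (fun t ↦ (φ t - commPart I (φ t)) * f t) angleMeasure) :
    ∫ t, φ t * eI I (n * t) * f t ∂angleMeasure
      = angleFourierCoeff I (fun t ↦ commPart I (φ t) * f t) (-n)
        + angleFourierCoeff I (fun t ↦ (φ t - commPart I (φ t)) * f t) n := by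
  rw [angleFourierCoeff, angleFourierCoeff,
    ← integral_add (integrable_eI_mul hI hP (by fun_prop)) (integrable_eI_mul hI hQ (by fun_prop))]
  simp only [mul_eI hI, add_mul, mul_assoc, Int.cast_neg, neg_mul, neg_neg]

theorem sum_norm_sq_integral_mul_eI_mul_le (hI : I ^ 2 = -1) {φ f : ℝ → ℍ[ℝ]}
    (hφ : AEStronglyMeasurable φ angleMeasure) (hf : AEStronglyMeasurable f angleMeasure)
    (hφf : MemLp (fun t ↦ φ t * f t) 2 angleMeasure) (s : Finset ι) {ν : ι → ℤ}
    (hν : ν.Injective) :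
    ∑ j ∈ s, ‖∫ t, φ t * eI I (ν j * t) * f t ∂angleMeasure‖ ^ 2
      ≤ 2 * ∫ t, ‖φ t * f t‖ ^ 2 ∂angleMeasure := by
  set P : ℝ → ℍ[ℝ] := fun t ↦ commPart I (φ t) * f t
  set Q : ℝ → ℍ[ℝ] := fun t ↦ (φ t - commPart I (φ t)) * f t
  have hPφ : AEStronglyMeasurable (fun t ↦ commPart I (φ t)) angleMeasure :=
    (continuous_commPart I).comp_aestronglyMeasurable hφ
  have hPQ (t : ℝ) : ‖P t‖ ^ 2 + ‖Q t‖ ^ 2 = ‖φ t * f t‖ ^ 2 := by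
    simp only [P, Q, norm_mul, mul_pow, ← add_mul, norm_sq_commPart_add_norm_sq_sub hI]
  have hP : MemLp P 2 angleMeasure := hφf.of_le (hPφ.mul hf) <| .of_forall fun t ↦
    le_of_sq_le_sq (by linarith [hPQ t, sq_nonneg ‖Q t‖]) (norm_nonneg _)
  have hQ : MemLp Q 2 angleMeasure := hφf.of_le ((hφ.sub hPφ).mul hf) <| .of_forall fun t ↦
    le_of_sq_le_sq (by linarith [hPQ t, sq_nonneg ‖P t‖]) (norm_nonneg _)
  have hν' : (fun j ↦ -ν j).Injective := neg_injective.comp hν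
  calc ∑ j ∈ s, ‖∫ t, φ t * eI I (ν j * t) * f t ∂angleMeasure‖ ^ 2
      = ∑ j ∈ s, ‖angleFourierCoeff I P (-ν j) + angleFourierCoeff I Q (ν j)‖ ^ 2 := by
        simp only [integral_mul_eI_mul hI _ (hP.integrable one_le_two) (hQ.integrable one_le_two),
          P, Q]
    _ ≤ ∑ j ∈ s, 2 * (‖angleFourierCoeff I P (-ν j)‖ ^ 2 + ‖angleFourierCoeff I Q (ν j)‖ ^ 2) := by
        gcongr with j
        exact (pow_le_pow_left₀ (norm_nonneg _) (norm_add_le _ _) 2).trans add_sq_le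
    _ ≤ 2 * (∫ t, ‖P t‖ ^ 2 ∂angleMeasure + ∫ t, ‖Q t‖ ^ 2 ∂angleMeasure) := by
        rw [← Finset.mul_sum, Finset.sum_add_distrib]
        gcongr
        · exact sum_norm_sq_angleFourierCoeff_le hI hP s hν'
        · exact sum_norm_sq_angleFourierCoeff_le hI hQ s hν
    _ = 2 * ∫ t, ‖φ t * f t‖ ^ 2 ∂angleMeasure := by
        rw [← integral_add (hP.integrable_norm_pow two_ne_zero)
          (hQ.integrable_norm_pow two_ne_zero)]
        simp only [hPQ]

theorem sum_integral_mul_eI_mul (hI : I ^ 2 = -1) {φ : ℝ → ℍ[ℝ]}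
    (hφ : Integrable φ angleMeasure) (n : ℤ) (s : Finset ι) (ν : ι → ℤ) (c : ι → ℍ[ℝ]) :
    ∑ k ∈ s, (∫ t, φ t * eI I ((n + ν k : ℤ) * t) ∂angleMeasure) * c k
      = ∫ t, φ t * eI I (n * t) * trigSum I s ν c t ∂angleMeasure := by
  have hint (m : ℤ) : Integrable (fun t ↦ φ t * eI I (m * t)) angleMeasure :=
    hφ.mul_bdd (c := 1) (by fun_prop) (.of_forall fun t ↦ (norm_eI hI _).le)
  simp only [← integral_mul_const_of_integrable (hint _)]
  rw [← integral_finsetSum s fun k _ ↦ (hint _).mul_const (c k)]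
  simp only [trigSum, Finset.mul_sum, Int.cast_add, add_mul, eI_add hI, mul_assoc]

theorem integral_norm_sq_mul_trigSum_le (hI : I ^ 2 = -1) {φ : ℝ → ℍ[ℝ]} {M : ℝ}
    (hφM : ∀ᵐ t ∂angleMeasure, ‖φ t‖ ≤ M) (s : Finset ι) {ν : ι → ℤ} (hν : ν.Injective)
    (c : ι → ℍ[ℝ]) :
    ∫ t, ‖φ t * trigSum I s ν c t‖ ^ 2 ∂angleMeasure ≤ M ^ 2 * ∑ k ∈ s, ‖c k‖ ^ 2 := by
  have hS := (memLp_trigSum hI s ν c 2).integrable_norm_pow two_ne_zero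
  rw [← integral_norm_sq_trigSum hI s hν, ← integral_const_mul]
  refine integral_mono_of_nonneg (.of_forall fun _ ↦ by positivity) (hS.const_mul _) ?_
  filter_upwards [hφM] with t ht
  rw [norm_mul, mul_pow]
  gcongr

theorem sum_norm_sq_hankel_le (hI : I ^ 2 = -1) {h : ℝ → ℍ[ℝ]} {M : ℝ}
    (hh : AEStronglyMeasurable h angleMeasure) (hhM : ∀ᵐ t ∂angleMeasure, ‖h t‖ ≤ M)
    {α : ℕ → ℍ[ℝ]} (hα : ∀ m : ℕ, angleFourierCoeff I h m = star (α m))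
    (s t : Finset ℕ) (v : ℕ → ℍ[ℝ]) :
    ∑ j ∈ s, ‖∑ k ∈ t, α (j + k) * v k‖ ^ 2 ≤ (√2 * M) ^ 2 * ∑ k ∈ t, ‖v k‖ ^ 2 := by
  set φ : ℝ → ℍ[ℝ] := fun θ ↦ star (h θ)
  set V := trigSum I t (fun k : ℕ ↦ (k : ℤ)) v
  have hφ : AEStronglyMeasurable φ angleMeasure := continuous_star.comp_aestronglyMeasurable hh
  have hφM : ∀ᵐ θ ∂angleMeasure, ‖φ θ‖ ≤ M := by simpa only [φ, norm_star] using hhM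
  have hV : MemLp V 2 angleMeasure := memLp_trigSum hI t _ v 2
  have hφV : MemLp (fun θ ↦ φ θ * V θ) 2 angleMeasure :=
    hV.of_le_mul (hφ.mul hV.1) (hφM.mono fun θ hθ ↦ by rw [norm_mul]; gcongr)
  have hα' (m : ℕ) : α m = ∫ θ, φ θ * eI I ((m : ℤ) * θ) ∂angleMeasure := by
    rw [← star_angleFourierCoeff hI, hα, star_star]
  have hsum (j : ℕ) :
      ∑ k ∈ t, α (j + k) * v k = ∫ θ, φ θ * eI I ((j : ℤ) * θ) * V θ ∂angleMeasure := by
    simp only [hα', Nat.cast_add]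
    exact sum_integral_mul_eI_mul hI (.of_bound hφ M hφM) j t _ v
  calc ∑ j ∈ s, ‖∑ k ∈ t, α (j + k) * v k‖ ^ 2
      = ∑ j ∈ s, ‖∫ θ, φ θ * eI I ((j : ℤ) * θ) * V θ ∂angleMeasure‖ ^ 2 := by simp only [hsum]
    _ ≤ 2 * ∫ θ, ‖φ θ * V θ‖ ^ 2 ∂angleMeasure :=
        sum_norm_sq_integral_mul_eI_mul_le hI hφ hV.1 hφV s Nat.cast_injective
    _ ≤ 2 * (M ^ 2 * ∑ k ∈ t, ‖v k‖ ^ 2) := by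
        gcongr
        exact integral_norm_sq_mul_trigSum_le hI hφM t Nat.cast_injective v
    _ = (√2 * M) ^ 2 * ∑ k ∈ t, ‖v k‖ ^ 2 := by
        rw [mul_pow, Real.sq_sqrt zero_le_two, mul_assoc]

end Hankel

theorem quasiMeasurePreserving_eI (σ : Measure IU) :
    Measure.QuasiMeasurePreserving (fun p : IU × ℝ ↦ eI p.1.1 p.2)
      (σ.prod angleMeasure) (sphereMeasure σ) := by
  have hmeas : Measurable fun p : IU × ℝ ↦ eI p.1.1 p.2 := by
    have hval : Measurable fun I : IU ↦ I.1 := measurable_subtype_coe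
    simp only [eI_eq_smul_add_smul]
    exact ((Real.measurable_cos.comp measurable_snd).smul_const 1).add
      ((Real.measurable_sin.comp measurable_snd).smul (hval.comp measurable_fst))
  refine ⟨hmeas, ?_⟩
  have hprod : σ.prod angleMeasure
      ≪ σ.prod (volume.restrict (Set.Ioc 0 (2 * Real.pi))) :=
    Measure.AbsolutelyContinuous.rfl.prod Measure.smul_absolutelyContinuous
  exact (hprod.map hmeas).trans
    (Measure.absolutelyContinuous_smul (ENNReal.inv_ne_zero.2 ENNReal.ofReal_ne_top))

theorem ae_norm_le_toReal_eLpNorm_top {X E : Type*} [MeasurableSpace X] [NormedAddCommGroup E]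
    {μ : Measure X} {f : X → E} (hf : MemLp f ⊤ μ) : ∀ᵐ x ∂μ, ‖f x‖ ≤ (eLpNorm f ⊤ μ).toReal := by
  rw [toReal_eLpNorm hf.1]
  exact ae_le_lpNorm_exponent_top hf

theorem nehari_sufficiency_general (σ : Measure IU) (α : ℕ → ℍ[ℝ]) (ψ : ℍ[ℝ] → ℍ[ℝ])
    (hψ : MemLp ψ ⊤ (sphereMeasure σ))
    (hcoef : ∃ᵐ I ∂σ, ∀ m : ℕ, fourierCoef ψ I.1 m = star (α m))
    (v : lp (fun _ : ℕ ↦ ℍ[ℝ]) 2) :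
    ∃ w : lp (fun _ : ℕ ↦ ℍ[ℝ]) 2, (∀ j, HasSum (fun k ↦ α (j + k) * v k) (w j)) ∧
      ‖w‖ ≤ √2 * (eLpNorm ψ ⊤ (sphereMeasure σ)).toReal * ‖v‖ := by
  have hqmp := quasiMeasurePreserving_eI σ
  have hmeas := (hψ.1.comp_quasiMeasurePreserving hqmp).prodMk_left
  have hbound := Measure.ae_ae_of_ae_prod (hqmp.ae (ae_norm_le_toReal_eLpNorm_top hψ))
  obtain ⟨I, hI, hImeas, hIbound⟩ := (hcoef.and_eventually (hmeas.and hbound)).exists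
  refine exists_lp_hasSum_of_sum_rpow_le (by norm_num) (by positivity) fun s t ↦ ?_
  simp only [fourierCoef_eq_angleFourierCoeff] at hI
  simpa using sum_norm_sq_hankel_le I.2 hImeas hIbound hI s t v

/-- Sufficiency in the quaternionic Nehari theorem, with the explicit bound: if there is a
slice `L^∞` function `ψ` on `∂𝔹` with Fourier coefficients `ψ̂(m) = star (α m)` for all
`m ≥ 0`, then the Hankel operator `Γ_α`, `(Γ_α v)(j) = Σ_k α(j+k) v(k)`, is (well defined
and) bounded on `ℓ²(ℕ, ℍ)` with `‖Γ_α‖ ≤ 2 ‖ψ‖_{L^∞(∂𝔹)}`. -/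
theorem nehari_sufficiency (σ : Measure IU) [IsProbabilityMeasure σ]
    (α : ℕ → Quaternion ℝ)
    (ψ : Quaternion ℝ → Quaternion ℝ) (hψ : IsSlice ψ)
    (hψm : AEStronglyMeasurable ψ (sphereMeasure σ))
    (hψtop : eLpNorm ψ ⊤ (sphereMeasure σ) ≠ ⊤)
    (hcoef : ∀ m : ℕ, ∀ I : Quaternion ℝ, I ^ 2 = -1 →
      fourierCoef ψ I (m : ℤ) = star (α m)) :
    ∀ v : lp (fun _ : ℕ => Quaternion ℝ) 2,
      ∃ w : lp (fun _ : ℕ => Quaternion ℝ) 2,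
        (∀ j : ℕ, HasSum (fun k : ℕ => α (j + k) * v k) (w j)) ∧
        ‖w‖ ≤ 2 * (eLpNorm ψ ⊤ (sphereMeasure σ)).toReal * ‖v‖ := by
  intro v
  obtain ⟨w, hw, hnorm⟩ := nehari_sufficiency_general σ α ψ ⟨hψm, hψtop.lt_top⟩
    (.of_forall fun I m ↦ hcoef m I.1 I.2) v
  exact ⟨w, hw, hnorm.trans (by gcongr; exact (Real.sqrt_le_left zero_le_two).2 (by norm_num))⟩
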